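/- For arbitrary nonzero q½, t½ and all f, g ∈ V: {f,g} = {g,f}; {T(f),g} = {f,T(g)}; {X·f,g} = {f,Y⁻¹(g)}; and {Y(f),g} = {f,X⁻¹·g}. (These are the symmetry of the duality pairing and its invariance under the duality anti-involution φ of the rank-one double affine Hecke algebra, which fixes T and sends X ↦ Y⁻¹, Y ↦ X⁻¹.) -/

import Mathlib

noncomputable section

/-- `V = ℂ[X, X⁻¹]`, the space of complex Laurent polynomials. -/
abbrev V : Type := LaurentPolynomial ℂ

/-- The monomial `X ^ m`. -/
def Xm (m : ℤ) : V := LaurentPolynomial.T m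

/-- The radical of the duality pairing. -/
def Rad (pair : V →ₗ[ℂ] V →ₗ[ℂ] ℂ) : Submodule ℂ V := LinearMap.ker pair

theorem Xm_add (a b : ℤ) : Xm (a + b) = Xm a * Xm b := LaurentPolynomial.T_add a b

theorem Xm_zero : Xm 0 = 1 := LaurentPolynomial.T_zero

theorem V_ind (P : V → Prop) (hadd : ∀ f g, P f → P g → P (f + g))
    (hsmul : ∀ (c : ℂ) f, P f → P (c • f)) (hX : ∀ m, P (Xm m)) (f : V) : P f := by
  induction f using LaurentPolynomial.induction_on' with
  | add p q hp hq => exact hadd p q hp hq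
  | C_mul_T n a =>
    have := hsmul a _ (hX n)
    rwa [LaurentPolynomial.smul_eq_C_mul] at this

theorem V_ind2 (P : V → Prop) (hadd : ∀ f g, P f → P g → P (f + g))
    (hsmul : ∀ (c : ℂ) f, P f → P (c • f)) (h1 : P 1)
    (hup : ∀ f, P f → P (Xm 1 * f)) (hdn : ∀ f, P f → P (Xm (-1) * f)) (f : V) : P f := by
  refine V_ind P hadd hsmul (fun m => ?_) f
  induction m using Int.induction_on with
  | zero => rw [Xm_zero]; exact h1
  | succ i ih => rw [add_comm, Xm_add]; exact hup _ ih
  | pred i ih => rw [sub_eq_add_neg, add_comm, Xm_add]; exact hdn _ ih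

theorem D_ne : (Xm 2 - 1 : V) ≠ 0 := by
  rw [← Xm_zero, sub_ne_zero]
  intro h
  have h2 := congrArg (fun p : V => p.coeff 2) h
  simp only [Xm, LaurentPolynomial.T_apply] at h2
  norm_num at h2

/-- symmetry of the duality pairing `{f,g} = ev(L_f(g))` and its
invariance under the duality anti-involution `φ` (which fixes `T` and sends
`X ↦ Y⁻¹`, `Y ↦ X⁻¹`): `{f,g} = {g,f}`, `{T f, g} = {f, T g}`,
`{X·f, g} = {f, Y⁻¹ g}` and `{Y f, g} = {f, X⁻¹·g}`. -/
theorem stmt9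
    (q2 t2 : ℂ) (hq2 : q2 ≠ 0) (ht2 : t2 ≠ 0)
    (S Top Pi Y : V →ₗ[ℂ] V)
    (hS : ∀ m : ℤ, S (Xm m) = Xm (-m))
    (hPi : ∀ m : ℤ, Pi (Xm m) = q2 ^ m • Xm (-m))
    (hT : ∀ f : V, (Xm 2 - 1) * Top f
        = t2 • ((Xm 2 - 1) * S f) + (t2 - t2⁻¹) • (S f - f))
    (hY : Y = Pi ∘ₗ Top)
    (ev : V →ₗ[ℂ] ℂ) (hev : ∀ m : ℤ, ev (Xm m) = t2 ^ (-m))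
    (Yz : ℤ → V →ₗ[ℂ] V)
    (hYz0 : Yz 0 = LinearMap.id) (hYz1 : Yz 1 = Y)
    (hYzadd : ∀ a b : ℤ, Yz (a + b) = Yz a ∘ₗ Yz b)
    (pair : V →ₗ[ℂ] V →ₗ[ℂ] ℂ)
    (hpair : ∀ (m : ℤ) (g : V), pair (Xm m) g = ev (Yz (-m) g))
    :
    ∀ f g : V,
      pair f g = pair g f ∧
      pair (Top f) g = pair f (Top g) ∧
      pair (Xm 1 * f) g = pair f (Yz (-1) g) ∧
      pair (Y f) g = pair f (Xm (-1) * g) := by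
  have hXX : Xm 1 * Xm (-1) = 1 := by rw [← Xm_add]; exact Xm_zero
  have hX2 : Xm 2 = Xm 1 * Xm 1 := by rw [← Xm_add]; rfl
  have hc1 : LaurentPolynomial.C t2 * LaurentPolynomial.C t2⁻¹ = (1 : V) := by
    rw [← map_mul, mul_inv_cancel₀ ht2, map_one]
  -- the reflection
  have hS1 : ∀ f, S (Xm 1 * f) = Xm (-1) * S f := by
    refine V_ind _ (fun f g hf hg => ?_) (fun c f hf => ?_) (fun m => ?_)
    · rw [mul_add, map_add, hf, hg, map_add, mul_add]
    · rw [mul_smul_comm, map_smul, hf, map_smul, mul_smul_comm]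
    · rw [← Xm_add, hS, hS, ← Xm_add]; congr 1; ring
  have hSS : ∀ f, S (S f) = f := by
    refine V_ind _ (fun f g hf hg => ?_) (fun c f hf => ?_) (fun m => ?_)
    · rw [map_add, map_add, hf, hg]
    · rw [map_smul, map_smul, hf]
    · rw [hS, hS, neg_neg]
  have hPi1 : ∀ f, Pi (Xm 1 * f) = q2 • (Xm (-1) * Pi f) := by
    refine V_ind _ (fun f g hf hg => ?_) (fun c f hf => ?_) (fun m => ?_)
    · rw [mul_add, map_add, hf, hg, map_add, mul_add, smul_add]
    · rw [mul_smul_comm, map_smul, hf, map_smul, mul_smul_comm, smul_comm]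
    · rw [← Xm_add, hPi, hPi, mul_smul_comm, ← Xm_add, smul_smul, zpow_add₀ hq2, zpow_one]
      congr 2; ring
  have hPiPi : ∀ f, Pi (Pi f) = f := by
    refine V_ind _ (fun f g hf hg => ?_) (fun c f hf => ?_) (fun m => ?_)
    · rw [map_add, map_add, hf, hg]
    · rw [map_smul, map_smul, hf]
    · rw [hPi, map_smul, hPi, neg_neg, smul_smul, ← zpow_add₀ hq2]; simp
  have hPi2 : ∀ f, Pi (Xm (-1) * f) = q2⁻¹ • (Xm 1 * Pi f) := by
    intro f
    have h := hPi1 (Xm (-1) * f)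
    rw [← mul_assoc, hXX, one_mul] at h
    rw [h, mul_smul_comm, ← mul_assoc, hXX, one_mul, smul_smul, inv_mul_cancel₀ hq2, one_smul]
  have hPione : Pi 1 = 1 := by rw [← Xm_zero, hPi]; simp
  have hSone : S 1 = 1 := by rw [← Xm_zero, hS]; simp
  -- T
  have hT' : ∀ f, (Xm 1 * Xm 1 - 1) * Top f = LaurentPolynomial.C t2 * ((Xm 1 * Xm 1 - 1) * S f)
      + (LaurentPolynomial.C t2 - LaurentPolynomial.C t2⁻¹) * (S f - f) := by
    intro f
    have h := hT f
    rwa [LaurentPolynomial.smul_eq_C_mul, LaurentPolynomial.smul_eq_C_mul, map_sub, hX2] at h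
  have hD : (Xm 1 * Xm 1 - 1 : V) ≠ 0 := by rw [← hX2]; exact D_ne
  have hST : ∀ f, (Xm 1 * Xm 1 - 1) * S (Top f) = LaurentPolynomial.C t2 * ((Xm 1 * Xm 1 - 1) * f)
      + (LaurentPolynomial.C t2 - LaurentPolynomial.C t2⁻¹) * (Xm 1 * Xm 1 * (S f - f)) := by
    intro f
    have h := congrArg S (hT' f)
    have e : ∀ g, S ((Xm 1 * Xm 1 - 1) * g) = (Xm (-1) * Xm (-1) - 1) * S g := by
      intro g
      rw [sub_mul, one_mul, map_sub, mul_assoc, hS1, hS1]; ring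
    rw [← map_sub, ← LaurentPolynomial.smul_eq_C_mul, ← LaurentPolynomial.smul_eq_C_mul,
      map_add, map_smul, map_smul, e, e, map_sub, hSS,
      LaurentPolynomial.smul_eq_C_mul, LaurentPolynomial.smul_eq_C_mul, map_sub] at h
    generalize (LaurentPolynomial.C t2 : V) = u at *
    generalize (LaurentPolynomial.C t2⁻¹ : V) = w at *
    generalize Xm 1 = x at *
    generalize Xm (-1) = y at *
    have hxy : x * x * (y * y) = 1 := by linear_combination (x * y + 1) * hXX
    linear_combination (-x * x) * h + (S (Top f) - u * f) * hxy
  have hTT : ∀ f, Top (Top f) = f + (t2 - t2⁻¹) • Top f := by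
    intro f
    rw [LaurentPolynomial.smul_eq_C_mul, map_sub]
    apply mul_left_cancel₀ hD
    have h1 := hT' f
    have h2 := hT' (Top f)
    have h3 := hST f
    apply mul_left_cancel₀ hD
    generalize (LaurentPolynomial.C t2 : V) = u at *
    generalize (LaurentPolynomial.C t2⁻¹ : V) = w at *
    generalize Xm 1 = x at *
    linear_combination (x * x - 1) * h2 + (u * (x * x - 1) + (u - w)) * h3
      - ((u - w) + (u - w) * (x * x - 1)) * h1 + (x * x - 1) * (x * x - 1) * f * hc1
  have hTXT : ∀ f, Top (Xm 1 * Top f) = Xm (-1) * f := by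
    intro f
    apply mul_left_cancel₀ hD
    have h1 := hT' f
    have h2 := hT' (Xm 1 * Top f)
    have h3 := hST f
    rw [hS1] at h2
    apply mul_left_cancel₀ hD
    generalize (LaurentPolynomial.C t2 : V) = u at *
    generalize (LaurentPolynomial.C t2⁻¹ : V) = w at *
    generalize Xm 1 = x at *
    generalize Xm (-1) = y at *
    linear_combination (x * x - 1) * h2 + (u * (x * x - 1) + (u - w)) * y * h3
      - (u - w) * x * h1 + (x * x - 1) * (x * x - 1) * y * f * hc1
      + (x * (2 * u * w * f - u * w * S f - u ^ 2 * f - w ^ 2 * f + w ^ 2 * S f)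
        + x ^ 3 * (u ^ 2 - u * w) * S f) * hXX
  have hT1 : Top 1 = t2 • (1 : V) := by
    apply mul_left_cancel₀ hD
    rw [hT', hSone, LaurentPolynomial.smul_eq_C_mul]; ring
  have hTX : ∀ f, Top (Xm 1 * f) = Xm (-1) * Top f - (t2 - t2⁻¹) • (Xm (-1) * f) := by
    intro f
    have h := hTXT (Top f - (t2 - t2⁻¹) • f)
    rw [map_sub, map_smul, hTT, add_sub_cancel_right, mul_sub, mul_smul_comm] at h
    exact h
  have hTY : ∀ f, Top (Xm (-1) * f) = Xm 1 * Top f + (t2 - t2⁻¹) • (Xm (-1) * f) := by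
    intro f
    rw [← hTXT f, hTT]
  -- evaluation
  have hevX : ∀ f, ev (Xm 1 * f) = t2⁻¹ * ev f := by
    refine V_ind _ (fun f g hf hg => ?_) (fun c f hf => ?_) (fun m => ?_)
    · rw [mul_add, map_add, hf, hg, map_add, mul_add]
    · rw [mul_smul_comm, map_smul, hf, map_smul, mul_smul_comm]
    · rw [← Xm_add, hev, hev, neg_add, zpow_add₀ ht2, zpow_neg_one]
  have hevT : ∀ f, ev (Top f) = t2 * ev f := by
    intro f
    by_cases ht : t2 * t2 = 1
    · have hi : t2⁻¹ = t2 := inv_eq_of_mul_eq_one_right ht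
      have h : Top f = t2 • S f := by
        apply mul_left_cancel₀ hD
        rw [hT', hi, LaurentPolynomial.smul_eq_C_mul]; ring
      rw [h, map_smul, smul_eq_mul]
      congr 1
      clear h
      revert f
      refine V_ind _ (fun f g hf hg => ?_) (fun c f hf => ?_) (fun m => ?_)
      · rw [map_add, map_add, hf, hg, map_add]
      · rw [map_smul, map_smul, hf, map_smul]
      · rw [hS, hev, hev, neg_neg, zpow_neg, ← inv_zpow, hi]
    · have h := congrArg ev (hT' f)
      rw [← map_sub, ← LaurentPolynomial.smul_eq_C_mul, ← LaurentPolynomial.smul_eq_C_mul,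
        map_add, map_smul, map_smul, sub_mul, sub_mul, one_mul, one_mul, map_sub, map_sub, map_sub,
        mul_assoc, mul_assoc, hevX, hevX, hevX, hevX, smul_eq_mul, smul_eq_mul] at h
      have hne : (t2⁻¹ * t2⁻¹ - 1) ≠ 0 := by
        intro h0
        apply ht
        field_simp at h0
        linear_combination -h0
      apply mul_left_cancel₀ hne
      have hi : t2 * t2⁻¹ = 1 := mul_inv_cancel₀ ht2
      linear_combination h + (ev (S f) - ev f) * t2⁻¹ * hi
  have hev1 : ev 1 = 1 := by rw [← Xm_zero, hev]; simp
  -- Y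
  have hYY' : ∀ f, Y (Yz (-1) f) = f := by
    intro f
    have h := hYzadd 1 (-1)
    rw [hYz1, add_neg_cancel, hYz0] at h
    exact (LinearMap.congr_fun h f).symm
  have hY'Y : ∀ f, Yz (-1) (Y f) = f := by
    intro f
    have h := hYzadd (-1) 1
    rw [hYz1, neg_add_cancel, hYz0] at h
    exact (LinearMap.congr_fun h f).symm
  have hYf : ∀ f, Y f = Pi (Top f) := by intro f; rw [hY]; rfl
  have hTY' : ∀ f, Top (Yz (-1) f) = Pi f := by
    intro f
    have h := hYY' f
    rw [hYf] at h
    rw [← hPiPi (Top _), h]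
  have hY'Pi : ∀ f, Yz (-1) (Pi f) = Top f - (t2 - t2⁻¹) • f := by
    intro f
    have h := hTT f
    rw [← hY'Y (Top f - (t2 - t2⁻¹) • f), hYf, map_sub, map_smul, h, add_sub_cancel_right]
  -- pairing
  have hp1 : ∀ g, pair 1 g = ev g := by
    intro g; rw [← Xm_zero, hpair, neg_zero, hYz0]; rfl
  have h3 : ∀ f g, pair (Xm 1 * f) g = pair f (Yz (-1) g) := by
    intro f g
    revert f
    refine V_ind _ (fun f k hf hk => ?_) (fun c f hf => ?_) (fun m => ?_)
    · rw [mul_add, map_add, map_add, LinearMap.add_apply, LinearMap.add_apply, hf, hk]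
    · rw [mul_smul_comm, map_smul, map_smul, LinearMap.smul_apply, LinearMap.smul_apply, hf]
    · rw [← Xm_add, hpair, hpair, neg_add, add_comm, hYzadd]; rfl
  have h3' : ∀ f g, pair (Xm (-1) * f) g = pair f (Y g) := by
    intro f g
    have h := h3 (Xm (-1) * f) (Y g)
    rw [← mul_assoc, hXX, one_mul, hY'Y] at h
    exact h.symm
  have h2 : ∀ f, ∀ g, pair (Top f) g = pair f (Top g) := by
    refine V_ind2 _ (fun f k hf hk g => ?_) (fun c f hf g => ?_) (fun g => ?_)
      (fun f hf g => ?_) (fun f hf g => ?_)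
    · rw [map_add, map_add, map_add, LinearMap.add_apply, LinearMap.add_apply, hf, hk]
    · rw [map_smul, map_smul, map_smul, LinearMap.smul_apply, LinearMap.smul_apply, hf]
    · rw [hT1, map_smul, LinearMap.smul_apply, hp1, hp1, hevT, smul_eq_mul]
    · rw [hTX, map_sub, map_smul, LinearMap.sub_apply, LinearMap.smul_apply, h3', h3', hf, h3,
        ← map_smul, ← map_sub, ← hY'Pi, hYf, hPiPi]
    · rw [hTY, map_add, map_smul, LinearMap.add_apply, LinearMap.smul_apply, h3, h3', h3', hf,
        ← map_smul, ← map_add, hTY', hYf, hYf, hTT]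
      simp only [map_add, map_smul]
  have hpi : ∀ f, ∀ g, pair (Pi f) g = pair f (Xm 1 * Top g) := by
    refine V_ind2 _ (fun f k hf hk g => ?_) (fun c f hf g => ?_) (fun g => ?_)
      (fun f hf g => ?_) (fun f hf g => ?_)
    · rw [map_add, map_add, map_add, LinearMap.add_apply, LinearMap.add_apply, hf, hk]
    · rw [map_smul, map_smul, map_smul, LinearMap.smul_apply, LinearMap.smul_apply, hf]
    · rw [hPione, hp1, hp1, hevX, hevT, inv_mul_cancel_left₀ ht2]
    · rw [hPi1, map_smul, LinearMap.smul_apply, h3', hf, h3, ← map_smul]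
      congr 1
      rw [← hPiPi (Xm 1 * Top g), hPi1, map_smul, map_smul, hY'Pi, hTY, add_sub_cancel_right, hYf]
    · rw [hPi2, map_smul, LinearMap.smul_apply, h3, hf, h3', ← map_smul]
      congr 1
      rw [hTY', hYf, hTXT, hPi2]
  have h4 : ∀ f g, pair (Y f) g = pair f (Xm (-1) * g) := by
    intro f g
    rw [hYf, hpi, h2, hTXT]
  have hYone : Y 1 = t2 • (1 : V) := by rw [hYf, hT1, map_smul, hPione]
  have hY'one : Yz (-1) 1 = t2⁻¹ • (1 : V) := by
    have h := hY'Y 1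
    rw [hYone, map_smul] at h
    nth_rewrite 2 [← h]
    rw [smul_smul, inv_mul_cancel₀ ht2, one_smul]
  have hevX' : ∀ f, ev (Xm (-1) * f) = t2 * ev f := by
    intro f
    have h := hevX (Xm (-1) * f)
    rw [← mul_assoc, hXX, one_mul] at h
    rw [h, mul_inv_cancel_left₀ ht2]
  have hg1 : ∀ g, pair g 1 = ev g := by
    refine V_ind2 _ (fun f k hf hk => ?_) (fun c f hf => ?_) ?_
      (fun f hf => ?_) (fun f hf => ?_)
    · rw [map_add, map_add, LinearMap.add_apply, hf, hk]
    · rw [map_smul, map_smul, LinearMap.smul_apply, hf]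
    · rw [hp1]
    · rw [h3, hY'one, map_smul, hf, hevX, smul_eq_mul]
    · rw [h3', hYone, map_smul, hf, hevX', smul_eq_mul]
  have h1 : ∀ f, ∀ g, pair f g = pair g f := by
    refine V_ind2 _ (fun f k hf hk g => ?_) (fun c f hf g => ?_) (fun g => ?_)
      (fun f hf g => ?_) (fun f hf g => ?_)
    · rw [map_add, map_add, LinearMap.add_apply, hf, hk]
    · rw [map_smul, map_smul, LinearMap.smul_apply, hf]
    · rw [hp1, hg1]
    · have h := h4 (Yz (-1) g) (Xm 1 * f)
      rw [hYY', ← mul_assoc, mul_comm (Xm (-1)), hXX, one_mul] at h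
      rw [h3, hf, h]
    · rw [h3', hf, h4]
  exact fun f g => ⟨h1 f g, h2 f g, h3 f g, h4 f g⟩
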